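/- Every finite simple graph with strictly more edges than vertices contains a subgraph that is either (i) a theta-graph: two distinct vertices joined by three pairwise internally vertex-disjoint paths, each of length at least 1 and at most one of length 1; (ii) a figure-eight: two cycles sharing exactly one vertex; or (iii) a dumbbell: two vertex-disjoint cycles together with a path of length at least 1 joining a vertex of one cycle to a vertex of the other, internally disjoint from both cycles. -/

import Mathlib

/-!
If a graph has more edges than vertices, then so does one of its connected components. In a
connected graph with more edges than vertices, removing an edge `e` of a cycle `C` leaves a
connected graph with at least as many edges as vertices, hence with another cycle `D`, which
avoids `e`. If `C` and `D` share two vertices, then the part of `C` around `e` between consecutive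
visits to `D` forms a theta-graph with `D`; if they share one vertex, they form a figure-eight;
if they are disjoint, a path between them completes a dumbbell.
-/

namespace Bicyclic

open SimpleGraph Walk

variable {V : Type*} {G : SimpleGraph V} {u v w x y : V} {S T : Set V} {e : Sym2 V}

/-- `G` contains a theta-graph: two distinct vertices joined by three internally disjoint paths.
As `G` is simple, at most one of the paths may be a single edge. -/
def HasTheta (G : SimpleGraph V) : Prop :=
  ∃ u v : V, u ≠ v ∧ ∃ P₁ P₂ P₃ : G.Walk u v,
    P₁.IsPath ∧ P₂.IsPath ∧ P₃.IsPath ∧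
    1 ≤ P₁.length ∧ 1 ≤ P₂.length ∧ 1 ≤ P₃.length ∧
    ¬(P₁.length = 1 ∧ P₂.length = 1) ∧
    ¬(P₁.length = 1 ∧ P₃.length = 1) ∧
    ¬(P₂.length = 1 ∧ P₃.length = 1) ∧
    (∀ x, x ∈ P₁.support → x ∈ P₂.support → x = u ∨ x = v) ∧
    (∀ x, x ∈ P₁.support → x ∈ P₃.support → x = u ∨ x = v) ∧
    (∀ x, x ∈ P₂.support → x ∈ P₃.support → x = u ∨ x = v)

/-- `G` contains a figure-eight: two cycles with exactly one common vertex, at which both are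
based. -/
def HasFigureEight (G : SimpleGraph V) : Prop :=
  ∃ (v : V) (C₁ C₂ : G.Walk v v), C₁.IsCycle ∧ C₂.IsCycle ∧
    ∀ x, x ∈ C₁.support → x ∈ C₂.support → x = v

/-- `G` contains a dumbbell: two disjoint cycles, based at the ends of a path that meets them only
there. -/
def HasDumbbell (G : SimpleGraph V) : Prop :=
  ∃ (u v : V) (C₁ : G.Walk u u) (C₂ : G.Walk v v) (P : G.Walk u v),
    C₁.IsCycle ∧ C₂.IsCycle ∧ P.IsPath ∧ 1 ≤ P.length ∧
    (∀ x, x ∈ C₁.support → x ∉ C₂.support) ∧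
    (∀ x, x ∈ P.support → x ∈ C₁.support → x = u) ∧
    (∀ x, x ∈ P.support → x ∈ C₂.support → x = v)

/-- `p` is an ear of the vertex set `S`: a path that meets `S` in its two ends and nowhere else. A
trivial path at a vertex of `S` counts as an ear. -/
structure IsEar (S : Set V) (p : G.Walk u v) : Prop where
  isPath : p.IsPath
  start_mem : u ∈ S
  end_mem : v ∈ S
  eq_or_eq_of_mem : ∀ z ∈ p.support, z ∈ S → z = u ∨ z = v

section Walks

theorem one_le_length_of_ne (p : G.Walk u v) (huv : u ≠ v) : 1 ≤ p.length :=
  not_nil_iff_lt_length.mp (not_nil_of_ne huv)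

theorem eq_of_length_eq_one {p q : G.Walk u v} (hp : p.length = 1) (hq : q.length = 1) :
    p = q := by
  match p, q with
  | cons _ nil, cons _ nil => rfl

theorem isPath_dropUntil_of_isCycle [DecidableEq V] {c : G.Walk v v} (hc : c.IsCycle)
    (hw : w ∈ c.support) (hvw : v ≠ w) : (c.dropUntil w hw).IsPath :=
  IsCycle.isPath_of_append_right (p := c.takeUntil w hw) (by simpa) (by simpa)

theorem eq_or_eq_of_mem_support_takeUntil_of_mem_support_dropUntil [DecidableEq V]
    {c : G.Walk v v} (hc : c.IsCycle) (hw : w ∈ c.support)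
    (hxt : x ∈ (c.takeUntil w hw).support) (hxd : x ∈ (c.dropUntil w hw).support) :
    x = v ∨ x = w := by
  have hnodup := hc.support_nodup
  rw [← c.take_spec hw, tail_support_append] at hnodup
  rw [mem_support_iff] at hxt hxd
  by_contra! hx
  exact List.disjoint_of_nodup_append hnodup (hxt.resolve_left hx.1) (hxd.resolve_left hx.2)

theorem exists_isEar_of_isPath {u v : V} {p : G.Walk u v} (hp : p.IsPath) (hu : u ∈ S)
    (hv : v ∈ S) (he : e ∈ p.edges) : ∃ (x y : V) (q : G.Walk x y), IsEar S q ∧ e ∈ q.edges := by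
  classical
  by_cases hS : ∀ z ∈ p.support, z ∈ S → z = u ∨ z = v
  · exact ⟨u, v, p, ⟨hp, hu, hv, hS⟩, he⟩
  push Not at hS
  obtain ⟨z, hzp, hzS, hzu, hzv⟩ := hS
  rw [← p.take_spec hzp, edges_append, List.mem_append] at he
  rcases he with he | he
  · have := length_takeUntil_lt_length hzp hzv
    exact exists_isEar_of_isPath (hp.takeUntil hzp) hu hzS he
  · have := length_dropUntil_lt_length hzp hzu
    exact exists_isEar_of_isPath (hp.dropUntil hzp) hzS hv he
termination_by p.length

theorem exists_isEar_of_isCycle {c : G.Walk u u} (hc : c.IsCycle) (hx : x ∈ c.support)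
    (hy : y ∈ c.support) (hxy : x ≠ y) (hxS : x ∈ S) (hyS : y ∈ S) (he : e ∈ c.edges) :
    ∃ (s t : V) (q : G.Walk s t), IsEar S q ∧ e ∈ q.edges := by
  classical
  have hc' : (c.rotate x hx).IsCycle := hc.rotate hx
  have hy' : y ∈ (c.rotate x hx).support := (c.mem_support_rotate_iff x hx).mpr hy
  have he' : e ∈ (c.rotate x hx).edges := (c.rotate_edges x hx).mem_iff.mpr he
  rw [← take_spec _ hy', edges_append, List.mem_append] at he'
  rcases he' with he | he
  · exact exists_isEar_of_isPath (hc'.isPath_takeUntil hy') hxS hyS he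
  · exact exists_isEar_of_isPath (isPath_dropUntil_of_isCycle hc' hy' hxy) hyS hxS he

theorem exists_isPath_between {u v : V} {p : G.Walk u v} (hp : p.IsPath) (hu : u ∈ S) (hv : v ∈ T) :
    ∃ x ∈ S, ∃ y ∈ T, ∃ q : G.Walk x y, q.IsPath ∧
      (∀ z ∈ q.support, z ∈ S → z = x) ∧ (∀ z ∈ q.support, z ∈ T → z = y) := by
  classical
  by_cases hS : ∀ z ∈ p.support, z ∈ S → z = u
  · by_cases hT : ∀ z ∈ p.support, z ∈ T → z = v
    · exact ⟨u, hu, v, hv, p, hp, hS, hT⟩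
    · push Not at hT
      obtain ⟨z, hzp, hzT, hzv⟩ := hT
      have := length_takeUntil_lt_length hzp hzv
      exact exists_isPath_between (hp.takeUntil hzp) hu hzT
  · push Not at hS
    obtain ⟨z, hzp, hzS, hzu⟩ := hS
    have := length_dropUntil_lt_length hzp hzu
    exact exists_isPath_between (hp.dropUntil hzp) hzS hv
termination_by p.length

end Walks

section TwoCycles

theorem hasTheta_of_isCycle_of_isEar {c : G.Walk w w} (hc : c.IsCycle) {q : G.Walk u v}
    (hq : IsEar {z | z ∈ c.support} q) (heq : e ∈ q.edges) (hec : e ∉ c.edges) : HasTheta G := by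
  classical
  have huv : u ≠ v := by
    rintro rfl
    simp [edges_eq_nil.mpr (isPath_iff_nil.mp hq.isPath)] at heq
  have hu : u ∈ c.support := hq.start_mem
  set d := c.rotate u hu
  have hdc : d.IsCycle := hc.rotate hu
  have hvd : v ∈ d.support := (c.mem_support_rotate_iff u hu).mpr hq.end_mem
  have hqd : ∀ z ∈ q.support, z ∈ d.support → z = u ∨ z = v := fun z hzq hzd ↦
    hq.eq_or_eq_of_mem z hzq ((c.mem_support_rotate_iff u hu).mp hzd)
  have hed : e ∉ d.edges := fun he ↦ hec ((c.rotate_edges u hu).mem_iff.mp he)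
  set a := d.takeUntil v hvd with ha
  set b := (d.dropUntil v hvd).reverse with hb
  have hqa : q ≠ a := by
    rintro rfl
    exact hed (d.edges_takeUntil_subset_edges hvd heq)
  have hqb : q ≠ b := by
    rintro rfl
    exact hed (d.edges_dropUntil_subset_edges hvd (by simpa [hb] using heq))
  have hab : a.length + b.length = d.length := by
    rw [ha, hb, length_reverse, ← length_append, take_spec]
  refine ⟨u, v, huv, q, a, b,
    hq.isPath, hdc.isPath_takeUntil hvd, (isPath_dropUntil_of_isCycle hdc hvd huv).reverse,
    one_le_length_of_ne q huv, one_le_length_of_ne a huv, one_le_length_of_ne b huv,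
    fun h ↦ hqa (eq_of_length_eq_one h.1 h.2), fun h ↦ hqb (eq_of_length_eq_one h.1 h.2), ?_,
    fun z hzq hza ↦ ?_, fun z hzq hzb ↦ ?_, fun z hza hzb ↦ ?_⟩
  · have := hdc.three_le_length
    lia
  · exact hqd z hzq (d.support_takeUntil_subset_support hvd hza)
  · exact hqd z hzq (d.support_dropUntil_subset_support hvd (by simpa [hb] using hzb))
  · exact eq_or_eq_of_mem_support_takeUntil_of_mem_support_dropUntil hdc hvd hza
      (by simpa [hb] using hzb)

theorem hasFigureEight_of_isCycle {c : G.Walk u u} {d : G.Walk v v} (hc : c.IsCycle)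
    (hd : d.IsCycle) (hxc : x ∈ c.support) (hxd : x ∈ d.support)
    (hx : ∀ z ∈ c.support, z ∈ d.support → z = x) : HasFigureEight G := by
  classical
  exact ⟨x, c.rotate x hxc, d.rotate x hxd, hc.rotate hxc, hd.rotate hxd, by simpa⟩

theorem hasDumbbell_of_isCycle {c : G.Walk u u} {d : G.Walk v v} (hc : c.IsCycle)
    (hd : d.IsCycle) (hcd : c.support.Disjoint d.support) (huv : G.Reachable u v) :
    HasDumbbell G := by
  classical
  obtain ⟨p, hp⟩ := huv.exists_isPath
  obtain ⟨x, hx, y, hy, q, hq, hqx, hqy⟩ := exists_isPath_between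
    (S := {z | z ∈ c.support}) (T := {z | z ∈ d.support}) hp c.start_mem_support d.start_mem_support
  have hxy : x ≠ y := fun h ↦ hcd hx (h ▸ hy)
  refine ⟨x, y, c.rotate x hx, d.rotate y hy, q, hc.rotate hx, hd.rotate hy, hq,
    one_le_length_of_ne q hxy, ?_, ?_, ?_⟩ <;>
  simp only [mem_support_rotate_iff]
  exacts [fun z hzc hzd ↦ hcd hzc hzd, hqx, hqy]

theorem hasTheta_or_hasFigureEight_or_hasDumbbell_of_isCycle {c : G.Walk u u} {d : G.Walk v v}
    (hc : c.IsCycle) (hd : d.IsCycle) (hec : e ∈ c.edges) (hed : e ∉ d.edges)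
    (huv : G.Reachable u v) : HasTheta G ∨ HasFigureEight G ∨ HasDumbbell G := by
  by_cases hcd : c.support.Disjoint d.support
  · exact .inr (.inr (hasDumbbell_of_isCycle hc hd hcd huv))
  obtain ⟨x, hxc, hxd⟩ : ∃ x ∈ c.support, x ∈ d.support := by
    simpa [List.Disjoint] using hcd
  by_cases hx : ∀ z ∈ c.support, z ∈ d.support → z = x
  · exact .inr (.inl (hasFigureEight_of_isCycle hc hd hxc hxd hx))
  push Not at hx
  obtain ⟨y, hyc, hyd, hyx⟩ := hx
  obtain ⟨s, t, q, hq, heq⟩ :=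
    exists_isEar_of_isCycle (S := {z | z ∈ d.support}) hc hxc hyc hyx.symm hxd hyd hec
  exact .inl (hasTheta_of_isCycle_of_isEar hd hq heq hed)

end TwoCycles

section Counting

theorem sum_connectedComponent {M : Type*} [AddCommMonoid M] [Fintype V]
    [Fintype G.ConnectedComponent] [∀ C : G.ConnectedComponent, Fintype C] (f : V → M) :
    ∑ C : G.ConnectedComponent, ∑ v : C, f v = ∑ v, f v := by
  let fiberEquiv : (Σ C : G.ConnectedComponent, C) ≃ V :=
    Equiv.sigmaFiberEquiv G.connectedComponentMk
  rw [← fiberEquiv.sum_comp f, Fintype.sum_sigma]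
  rfl

theorem degree_toSimpleGraph (C : G.ConnectedComponent) (v : C) [Fintype (G.neighborSet v)]
    [Fintype (C.toSimpleGraph.neighborSet v)] : C.toSimpleGraph.degree v = G.degree v := by
  rw [← card_neighborSet_eq_degree, ← card_neighborSet_eq_degree]
  refine Fintype.card_of_bijective (f := fun w ↦ ⟨w, w.2⟩) ⟨fun _ _ hww ↦ ?_, fun w ↦ ?_⟩
  · exact Subtype.ext (Subtype.ext (Subtype.mk.inj hww))
  · exact ⟨⟨⟨w, (C.mem_supp_congr_adj w.2).mp v.2⟩, w.2⟩, rfl⟩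

variable [Finite V]

theorem not_isAcyclic_of_card_le (hG : G.Connected) (h : Nat.card V ≤ Nat.card G.edgeSet) :
    ¬ G.IsAcyclic := by
  intro hacyc
  have := (isTree_iff_connected_and_card.mp ⟨hG, hacyc⟩).2
  lia

theorem exists_isCycle_notMem_edges (hG : G.Connected) (h : Nat.card V < Nat.card G.edgeSet)
    {c : G.Walk u u} (hc : c.IsCycle) (he : e ∈ c.edges) :
    ∃ (v : V) (d : G.Walk v v), d.IsCycle ∧ e ∉ d.edges := by
  have heG : e ∈ G.edgeSet := c.edges_subset_edgeSet he
  have hconn : (G.deleteEdges {e}).Connected := by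
    induction e with
    | h x y =>
      exact hG.connected_delete_edge_of_not_isBridge fun hb ↦ hb.notMem_edges_of_isCycle hc he
  have hcard : Nat.card V ≤ Nat.card (G.deleteEdges {e}).edgeSet := by
    have := Set.ncard_sdiff_singleton_add_one heG
    rw [edgeSet_deleteEdges, Nat.card_coe_set_eq]
    rw [Nat.card_coe_set_eq] at h
    lia
  obtain ⟨v, d, hd⟩ : ∃ (v : V) (d : (G.deleteEdges {e}).Walk v v), d.IsCycle := by
    simpa [IsAcyclic] using not_isAcyclic_of_card_le hconn hcard
  refine ⟨v, d.mapLe (deleteEdges_le {e}), hd.mapLe _, fun hed ↦ ?_⟩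
  rw [edges_mapLe_eq_edges] at hed
  simpa using d.edges_subset_edgeSet hed

theorem exists_two_isCycle_of_connected (hG : G.Connected)
    (h : Nat.card V < Nat.card G.edgeSet) :
    ∃ (u v : V) (c : G.Walk u u) (d : G.Walk v v) (e : Sym2 V),
      c.IsCycle ∧ d.IsCycle ∧ e ∈ c.edges ∧ e ∉ d.edges := by
  obtain ⟨u, c, hc⟩ : ∃ (u : V) (c : G.Walk u u), c.IsCycle := by
    simpa [IsAcyclic] using not_isAcyclic_of_card_le hG h.le
  obtain ⟨e, he⟩ := List.exists_mem_of_ne_nil c.edges (by simpa using hc.not_nil)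
  obtain ⟨v, d, hd, hed⟩ := exists_isCycle_notMem_edges hG h hc he
  exact ⟨u, v, c, d, e, hc, hd, he, hed⟩

theorem exists_connectedComponent_card_lt (h : Nat.card V < Nat.card G.edgeSet) :
    ∃ C : G.ConnectedComponent, Nat.card C < Nat.card C.toSimpleGraph.edgeSet := by
  have := Fintype.ofFinite V
  classical
  suffices ∑ C : G.ConnectedComponent, 2 * Nat.card C <
      ∑ C : G.ConnectedComponent, 2 * Nat.card C.toSimpleGraph.edgeSet by
    obtain ⟨C, -, hC⟩ := Finset.exists_lt_of_sum_lt this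
    exact ⟨C, by lia⟩
  calc ∑ C : G.ConnectedComponent, 2 * Nat.card C
      = ∑ v : V, 2 := by simp [← sum_connectedComponent (G := G), mul_comm]
    _ = 2 * Nat.card V := by simp [mul_comm]
    _ < 2 * Nat.card G.edgeSet := by lia
    _ = ∑ v, G.degree v := by
      rw [sum_degrees_eq_twice_card_edges, edgeFinset_card, Nat.card_eq_fintype_card]
    _ = ∑ C : G.ConnectedComponent, ∑ v : C, C.toSimpleGraph.degree v := by
      simp only [degree_toSimpleGraph, ← sum_connectedComponent (G := G)]
    _ = ∑ C : G.ConnectedComponent, 2 * Nat.card C.toSimpleGraph.edgeSet := by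
      simp only [sum_degrees_eq_twice_card_edges, edgeFinset_card, Nat.card_eq_fintype_card]

end Counting

end Bicyclic

/-- Every finite simple graph with strictly more edges than vertices contains
(i) a theta-subgraph: two distinct vertices joined by three pairwise internally
vertex-disjoint paths, each of length at least 1 and at most one of length 1; or
(ii) a figure-eight: two cycles sharing exactly one vertex; or
(iii) a dumbbell: two vertex-disjoint cycles together with a path of length at least 1
joining a vertex of one cycle to a vertex of the other, internally disjoint from both. -/
theorem stmt_5 {V : Type*} [Fintype V] (G : SimpleGraph V) [DecidableRel G.Adj]
    (h : Fintype.card V < G.edgeFinset.card) :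
    -- (i) theta-graph
    (∃ (u v : V), u ≠ v ∧ ∃ (P1 P2 P3 : G.Walk u v),
      P1.IsPath ∧ P2.IsPath ∧ P3.IsPath ∧
      1 ≤ P1.length ∧ 1 ≤ P2.length ∧ 1 ≤ P3.length ∧
      ¬(P1.length = 1 ∧ P2.length = 1) ∧
      ¬(P1.length = 1 ∧ P3.length = 1) ∧
      ¬(P2.length = 1 ∧ P3.length = 1) ∧
      (∀ x, x ∈ P1.support → x ∈ P2.support → x = u ∨ x = v) ∧
      (∀ x, x ∈ P1.support → x ∈ P3.support → x = u ∨ x = v) ∧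
      (∀ x, x ∈ P2.support → x ∈ P3.support → x = u ∨ x = v)) ∨
    -- (ii) figure-eight
    (∃ (v : V) (C1 C2 : G.Walk v v),
      C1.IsCycle ∧ C2.IsCycle ∧
      (∀ x, x ∈ C1.support → x ∈ C2.support → x = v)) ∨
    -- (iii) dumbbell
    (∃ (u v : V) (C1 : G.Walk u u) (C2 : G.Walk v v) (P : G.Walk u v),
      C1.IsCycle ∧ C2.IsCycle ∧ P.IsPath ∧ 1 ≤ P.length ∧
      (∀ x, x ∈ C1.support → x ∉ C2.support) ∧
      (∀ x, x ∈ P.support → x ∈ C1.support → x = u) ∧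
      (∀ x, x ∈ P.support → x ∈ C2.support → x = v)) := by
  obtain ⟨K, hK⟩ := Bicyclic.exists_connectedComponent_card_lt (G := G) (by
    rwa [Nat.card_eq_fintype_card, Nat.card_eq_fintype_card, ← SimpleGraph.edgeFinset_card])
  obtain ⟨u, v, c, d, e, hc, hd, hec, hed⟩ :=
    Bicyclic.exists_two_isCycle_of_connected K.connected_toSimpleGraph hK
  have hinj : Function.Injective K.toSimpleGraph_hom := Subtype.val_injective
  exact Bicyclic.hasTheta_or_hasFigureEight_or_hasDumbbell_of_isCycle (hc.map hinj) (hd.map hinj)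
    (SimpleGraph.Walk.edges_map _ c ▸ List.mem_map_of_mem hec)
    (by rwa [SimpleGraph.Walk.edges_map, List.mem_map_of_injective (Sym2.map.injective hinj)])
    (K.connected_toSimpleGraph.preconnected u v |>.map K.toSimpleGraph_hom)
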